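/- In a finite simple graph where every vertex has degree at most d, the number of connected induced subgraphs of size k containing a fixed vertex v is at most (d·k)^{k-1} (in particular, it is bounded by a function of d and k only, independent of the total number of vertices). -/

import Mathlib

/-! Grow subsets from `{v}`, adding at each step one vertex of the outer boundary of the current
set. A set of `m` vertices has at most `d * m` outer boundary vertices, so `n` steps produce at most
`d ^ n * n !` sets. A connected set containing `v` is obtained in this way: as long as the current
set does not exhaust it, some edge inside it leads out of the current set. -/

section Boundary

variable {V : Type*} [DecidableEq V] {G : SimpleGraph V} [G.LocallyFinite]

variable (G) in
/-- The outer vertex boundary of `T`: the vertices outside `T` with a neighbour in `T`. -/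
def outerBoundary (T : Finset V) : Finset V :=
  T.biUnion (fun x ↦ G.neighborFinset x) \ T

theorem mem_outerBoundary {T : Finset V} {u : V} :
    u ∈ outerBoundary G T ↔ (∃ x ∈ T, G.Adj x u) ∧ u ∉ T := by
  simp [outerBoundary]

theorem card_outerBoundary_le {d : ℕ} {T : Finset V} (hdeg : ∀ x ∈ T, G.degree x ≤ d) :
    (outerBoundary G T).card ≤ d * T.card :=
  calc (outerBoundary G T).card
    _ ≤ (T.biUnion fun x ↦ G.neighborFinset x).card := Finset.card_le_card Finset.sdiff_subset
    _ ≤ T.card * d := Finset.card_biUnion_le_card_mul _ _ d hdeg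
    _ = d * T.card := Nat.mul_comm _ _

theorem exists_mem_outerBoundary_of_preconnected_induce {S : Set V} {T : Finset V}
    (hS : (G.induce S).Preconnected) (hT : T.Nonempty) (hTS : (T : Set V) ⊂ S) :
    ∃ u ∈ S, u ∈ outerBoundary G T := by
  obtain ⟨a, ha⟩ := hT
  obtain ⟨b, hbS, hbT⟩ := Set.exists_of_ssubset hTS
  obtain ⟨p⟩ := hS ⟨a, hTS.subset ha⟩ ⟨b, hbS⟩
  obtain ⟨e, -, hfst, hsnd⟩ := p.exists_boundary_dart {x | (x : V) ∈ T} ha hbT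
  exact ⟨e.snd, e.snd.2, mem_outerBoundary.mpr ⟨⟨e.fst, hfst, e.adj⟩, hsnd⟩⟩

end Boundary

section GrownSets

variable {V : Type*} [DecidableEq V] {G : SimpleGraph V} [G.LocallyFinite] {v : V} {n : ℕ}

variable (G v) in
/-- The vertex sets obtained from `{v}` by inserting `n` times a vertex of the outer boundary of
the current set; they include all connected sets of `n + 1` vertices containing `v`. -/
def grownSets : ℕ → Finset (Finset V)
  | 0 => {{v}}
  | n + 1 => (grownSets n).biUnion fun T ↦ (outerBoundary G T).image fun u ↦ insert u T

theorem mem_grownSets_succ {S : Finset V} :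
    S ∈ grownSets G v (n + 1) ↔ ∃ T ∈ grownSets G v n, ∃ u ∈ outerBoundary G T, insert u T = S := by
  simp only [grownSets, Finset.mem_biUnion, Finset.mem_image]

theorem card_of_mem_grownSets {T : Finset V} (hT : T ∈ grownSets G v n) : T.card = n + 1 := by
  induction n generalizing T with
  | zero => rw [Finset.mem_singleton.mp hT, Finset.card_singleton]
  | succ n ih =>
    obtain ⟨T', hT', u, hu, rfl⟩ := mem_grownSets_succ.mp hT
    rw [Finset.card_insert_of_notMem (mem_outerBoundary.mp hu).2, ih hT']

theorem card_grownSets_le {d : ℕ} (hdeg : ∀ x, G.degree x ≤ d) :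
    (grownSets G v n).card ≤ d ^ n * n.factorial := by
  induction n with
  | zero => simp [grownSets]
  | succ n ih =>
    have hstep : ∀ T ∈ grownSets G v n,
        ((outerBoundary G T).image fun u ↦ insert u T).card ≤ d * (n + 1) := fun T hT ↦
      calc ((outerBoundary G T).image fun u ↦ insert u T).card
        _ ≤ (outerBoundary G T).card := Finset.card_image_le
        _ ≤ d * T.card := card_outerBoundary_le fun x _ ↦ hdeg x
        _ = d * (n + 1) := by rw [card_of_mem_grownSets hT]
    calc (grownSets G v (n + 1)).card
      _ ≤ (grownSets G v n).card * (d * (n + 1)) := Finset.card_biUnion_le_card_mul _ _ _ hstep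
      _ ≤ d ^ n * n.factorial * (d * (n + 1)) := Nat.mul_le_mul_right _ ih
      _ = d ^ (n + 1) * (n + 1).factorial := by rw [Nat.factorial_succ]; ring

theorem exists_mem_grownSets_subset {S : Finset V} (hv : v ∈ S)
    (hS : (G.induce (S : Set V)).Preconnected) (hn : n < S.card) :
    ∃ T ∈ grownSets G v n, T ⊆ S := by
  induction n with
  | zero => exact ⟨{v}, Finset.mem_singleton_self _, Finset.singleton_subset_iff.mpr hv⟩
  | succ n ih =>
    obtain ⟨T, hT, hTS⟩ := ih (by lia)
    have hcard : T.card = n + 1 := card_of_mem_grownSets hT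
    have hss : T ⊂ S := hTS.ssubset_of_ne (by rintro rfl; lia)
    obtain ⟨u, huS, hu⟩ := exists_mem_outerBoundary_of_preconnected_induce hS
      (Finset.card_pos.mp (by lia)) (Finset.coe_ssubset.mpr hss)
    exact ⟨insert u T, mem_grownSets_succ.mpr ⟨T, hT, u, hu, rfl⟩, Finset.insert_subset huS hTS⟩

theorem mem_grownSets_of_preconnected_induce {S : Finset V} (hv : v ∈ S)
    (hS : (G.induce (S : Set V)).Preconnected) : S ∈ grownSets G v (S.card - 1) := by
  have hpos : 0 < S.card := Finset.card_pos.mpr ⟨v, hv⟩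
  obtain ⟨T, hT, hTS⟩ := exists_mem_grownSets_subset hv hS (Nat.sub_one_lt hpos.ne')
  have hcard : S.card ≤ T.card := by rw [card_of_mem_grownSets hT]; lia
  rwa [Finset.eq_of_subset_of_card_le hTS hcard] at hT

end GrownSets

theorem pow_mul_factorial_le_mul_pow (d : ℕ) {n m : ℕ} (hnm : n ≤ m) :
    d ^ n * n.factorial ≤ (d * m) ^ n :=
  calc d ^ n * n.factorial
    _ ≤ d ^ n * n ^ n := Nat.mul_le_mul_left _ n.factorial_le_pow
    _ ≤ d ^ n * m ^ n := by gcongr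
    _ = (d * m) ^ n := (mul_pow d m n).symm

theorem stmt10_general {V : Type*} (G : SimpleGraph V) [G.LocallyFinite] (d : ℕ)
    (hdeg : ∀ v, G.degree v ≤ d) (k : ℕ) (v : V) :
    {S : Finset V | v ∈ S ∧ S.card = k ∧ (G.induce (↑S : Set V)).Connected}.encard
      ≤ (d ^ (k - 1) * (k - 1).factorial : ℕ) := by
  classical
  have hsub : {S : Finset V | v ∈ S ∧ S.card = k ∧ (G.induce (↑S : Set V)).Connected} ⊆
      (grownSets G v (k - 1) : Set (Finset V)) := by
    rintro S ⟨hv, rfl, hS⟩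
    exact mem_grownSets_of_preconnected_induce hv hS.preconnected
  refine (Set.encard_le_encard hsub).trans ?_
  rw [Set.encard_coe_eq_coe_finsetCard]
  exact_mod_cast card_grownSets_le hdeg

/-- In a graph of maximum degree at most `d`, the number of connected induced subgraphs of
size `k` containing a fixed vertex `v` is at most `(d*k)^(k-1)`. -/
theorem stmt10 {V : Type*} [Fintype V] [DecidableEq V] (G : SimpleGraph V)
    [DecidableRel G.Adj] (d : ℕ) (hdeg : ∀ v, G.degree v ≤ d) (k : ℕ) (v : V) :
    {S : Finset V | v ∈ S ∧ S.card = k ∧ (G.induce (↑S : Set V)).Connected}.ncard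
      ≤ (d * k) ^ (k - 1) :=
  (ENat.toNat_le_of_le_natCast (stmt10_general G d hdeg k v)).trans
    (pow_mul_factorial_le_mul_pow d (Nat.sub_le k 1))
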